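/- For every c > 0 and all x, y ∈ 𝔹ⁿ = {x ∈ ℝⁿ : |x| < 1} (n ≥ 2), the inequality min{1/(2c), 1/(1+c)}·T(x,y) ≤ |x−y|/(|x−y| + c(2 − |x| − |y|)) ≤ max{1, 1/c}·T(x,y) holds, where T(x,y) = |x−y|/√(|x−y|² + (1−|x|²)(1−|y|²)). -/

import Mathlib

/-!
Write `d = |x - y|`, `s = 2 - |x| - |y|` and `A = √(d² + (1 - |x|²)(1 - |y|²))`. Then
`(d + s) / 2 ≤ A ≤ d + s` and `d ≤ A`, and the theorem follows by comparing `d + c s` with `d + s`.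
The upper bound on `A` is AM-GM. For the lower one, `4 A² - (d + s)²` is a convex quadratic in `d`
with vertex at `d = s / 3`, so on the interval `||x| - |y|| ≤ d ≤ |x| + |y|` given by the triangle
inequality its minimum is at the vertex or at an endpoint. At the endpoints `A` equals
`1 - |x||y|` and `1 + |x||y|` respectively.
-/

section RealInequalities

variable {a b c d s A : ℝ}

theorem one_sub_sq_mul_one_sub_sq_le_sq (ha : a ≤ 1) (hb₀ : -1 ≤ b) (hb₁ : b ≤ 1) :
    (1 - a ^ 2) * (1 - b ^ 2) ≤ (2 - a - b) ^ 2 := by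
  have hprod : (1 + a) * (1 + b) ≤ 2 * 2 :=
    mul_le_mul (by linarith) (by linarith) (by linarith) zero_le_two
  calc (1 - a ^ 2) * (1 - b ^ 2) = (1 - a) * (1 - b) * ((1 + a) * (1 + b)) := by ring
    _ ≤ (1 - a) * (1 - b) * (2 * 2) :=
      mul_le_mul_of_nonneg_left hprod (mul_nonneg (by linarith) (by linarith))
    _ = 4 * (1 - a) * (1 - b) := by ring
    _ ≤ (1 - a + (1 - b)) ^ 2 := four_mul_le_sq_add _ _
    _ = (2 - a - b) ^ 2 := by ring

theorem two_sub_sub_add_abs_sub_le (ha₀ : 0 ≤ a) (ha₁ : a ≤ 1) (hb₀ : 0 ≤ b) (hb₁ : b ≤ 1) :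
    2 - a - b + |a - b| ≤ 2 * (1 - a * b) := by
  have ha : a * b ≤ a := mul_le_of_le_one_right ha₀ hb₁
  have hb : a * b ≤ b := mul_le_of_le_one_left hb₀ ha₁
  rcases abs_cases (a - b) with ⟨h, -⟩ | ⟨h, -⟩ <;> linarith

theorem sq_le_three_mul_one_sub_sq_mul_one_sub_sq (ha : 0 ≤ a) (hb : 0 ≤ b)
    (hdiff : 3 * |a - b| ≤ 2 - a - b) (hsum : 1 / 2 ≤ a + b) :
    (2 - a - b) ^ 2 ≤ 3 * ((1 - a ^ 2) * (1 - b ^ 2)) := by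
  have hdiff_sq : 9 * (a - b) ^ 2 ≤ (2 - a - b) ^ 2 := by
    have := pow_le_pow_left₀ (by positivity) hdiff 2
    rwa [mul_pow, sq_abs, show (3 : ℝ) ^ 2 = 9 by norm_num] at this
  have hfst : 2 / 9 * (2 - a - b) ^ 2 ≤ (1 - a) * (1 - b) := by linarith
  have hsnd : 3 / 2 ≤ (1 + a) * (1 + b) := by linarith [mul_nonneg ha hb]
  have hfst_nonneg : 0 ≤ (1 - a) * (1 - b) := le_trans (by positivity) hfst
  calc (2 - a - b) ^ 2 = 3 * (2 / 9 * (2 - a - b) ^ 2 * (3 / 2)) := by ring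
    _ ≤ 3 * ((1 - a) * (1 - b) * ((1 + a) * (1 + b))) := by gcongr
    _ = 3 * ((1 - a ^ 2) * (1 - b ^ 2)) := by ring

theorem sq_add_two_sub_sub_le (ha₀ : 0 ≤ a) (ha₁ : a ≤ 1) (hb₀ : 0 ≤ b) (hb₁ : b ≤ 1)
    (hd_lower : |a - b| ≤ d) (hd_upper : d ≤ a + b) :
    (d + (2 - a - b)) ^ 2 ≤ 4 * (d ^ 2 + (1 - a ^ 2) * (1 - b ^ 2)) := by
  rcases le_total (2 - a - b) (3 * |a - b|) with hleft | hdiff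
  · have hmono : 0 ≤ (d - |a - b|) * (3 * (d + |a - b|) - 2 * (2 - a - b)) :=
      mul_nonneg (by linarith) (by linarith)
    have hendpoint : (2 - a - b + |a - b|) ^ 2 ≤ (2 * (1 - a * b)) ^ 2 :=
      pow_le_pow_left₀ (by linarith [abs_nonneg (a - b)])
        (two_sub_sub_add_abs_sub_le ha₀ ha₁ hb₀ hb₁) 2
    linarith [sq_abs (a - b)]
  rcases le_total (3 * (a + b)) (2 - a - b) with hright | hsum
  · have hmono : 0 ≤ (a + b - d) * (2 * (2 - a - b) - 3 * (d + (a + b))) :=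
      mul_nonneg (by linarith) (by linarith)
    have hendpoint : 1 ^ 2 ≤ (1 + a * b) ^ 2 :=
      pow_le_pow_left₀ zero_le_one (by linarith [mul_nonneg ha₀ hb₀]) 2
    linarith
  · have hvertex := sq_le_three_mul_one_sub_sq_mul_one_sub_sq ha₀ hb₀ hdiff (by linarith)
    linarith [sq_nonneg (3 * d - (2 - a - b))]

theorem min_mul_add_mul_le (hc : 0 < c) (hd : 0 ≤ d) (hs : 0 ≤ s) (hdA : d ≤ A)
    (hdsA : d + s ≤ 2 * A) : min (1 / (2 * c)) (1 / (1 + c)) * (d + c * s) ≤ A := by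
  have hD : 0 ≤ d + c * s := by positivity
  rcases le_total 1 c with h | h
  · refine (mul_le_mul_of_nonneg_right (min_le_left _ _) hD).trans ?_
    rw [one_div_mul_eq_div, div_le_iff₀' (by positivity)]
    calc d + c * s ≤ c * d + c * s := by gcongr; exact le_mul_of_one_le_left hd h
      _ = c * (d + s) := by ring
      _ ≤ c * (2 * A) := by gcongr
      _ = 2 * c * A := by ring
  · refine (mul_le_mul_of_nonneg_right (min_le_right _ _) hD).trans ?_
    rw [one_div_mul_eq_div, div_le_iff₀' (by positivity)]
    calc d + c * s = (1 - c) * d + c * (d + s) := by ring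
      _ ≤ (1 - c) * A + c * (2 * A) := by
        have : 0 ≤ 1 - c := sub_nonneg.2 h
        gcongr
      _ = (1 + c) * A := by ring

theorem add_le_max_mul_add_mul (hc : 0 < c) (hd : 0 ≤ d) (hs : 0 ≤ s) :
    d + s ≤ max 1 (1 / c) * (d + c * s) :=
  calc d + s = 1 * d + 1 / c * (c * s) := by field_simp
    _ ≤ max 1 (1 / c) * d + max 1 (1 / c) * (c * s) := by
      gcongr
      · exact le_max_left _ _
      · exact le_max_right _ _
    _ = max 1 (1 / c) * (d + c * s) := by ring

end RealInequalities

section AhlforsBracket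

variable {E : Type*} [SeminormedAddGroup E] {x y : E}

/-- The Ahlfors bracket of two points of the unit ball, the denominator of
`th (ρ(x, y) / 2) = |x - y| / √(|x - y|² + (1 - |x|²)(1 - |y|²))`. In a Euclidean space its square
is `1 - 2 ⟪x, y⟫ + |x|² |y|²`; the form chosen here needs no inner product. -/
noncomputable def ahlforsBracket (x y : E) : ℝ :=
  √(dist x y ^ 2 + (1 - ‖x‖ ^ 2) * (1 - ‖y‖ ^ 2))

theorem ahlforsBracket_pos (hx : ‖x‖ < 1) (hy : ‖y‖ < 1) : 0 < ahlforsBracket x y := by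
  have hx' : 0 < 1 - ‖x‖ ^ 2 := sub_pos.2 (pow_lt_one₀ (norm_nonneg x) hx two_ne_zero)
  have hy' : 0 < 1 - ‖y‖ ^ 2 := sub_pos.2 (pow_lt_one₀ (norm_nonneg y) hy two_ne_zero)
  exact Real.sqrt_pos.2 (by positivity)

theorem dist_le_ahlforsBracket (hx : ‖x‖ ≤ 1) (hy : ‖y‖ ≤ 1) : dist x y ≤ ahlforsBracket x y := by
  have hx' : 0 ≤ 1 - ‖x‖ ^ 2 := sub_nonneg.2 (pow_le_one₀ (norm_nonneg x) hx)
  have hy' : 0 ≤ 1 - ‖y‖ ^ 2 := sub_nonneg.2 (pow_le_one₀ (norm_nonneg y) hy)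
  exact Real.le_sqrt_of_sq_le (le_add_of_nonneg_right (mul_nonneg hx' hy'))

theorem ahlforsBracket_le (hx : ‖x‖ ≤ 1) (hy : ‖y‖ ≤ 1) :
    ahlforsBracket x y ≤ dist x y + (2 - ‖x‖ - ‖y‖) := by
  have hd : 0 ≤ dist x y := dist_nonneg
  have hs : 0 ≤ 2 - ‖x‖ - ‖y‖ := by linarith
  have hprod : (1 - ‖x‖ ^ 2) * (1 - ‖y‖ ^ 2) ≤ (2 - ‖x‖ - ‖y‖) ^ 2 :=
    one_sub_sq_mul_one_sub_sq_le_sq hx (by linarith [norm_nonneg y]) hy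
  refine Real.sqrt_le_iff.2 ⟨add_nonneg hd hs, ?_⟩
  linarith [mul_nonneg hd hs]

theorem dist_add_le_two_mul_ahlforsBracket (hx : ‖x‖ ≤ 1) (hy : ‖y‖ ≤ 1) :
    dist x y + (2 - ‖x‖ - ‖y‖) ≤ 2 * ahlforsBracket x y := by
  have hd_lower : |‖x‖ - ‖y‖| ≤ dist x y := by simpa using abs_dist_sub_le x y 0
  have hsq := sq_add_two_sub_sub_le (norm_nonneg x) hx (norm_nonneg y) hy hd_lower
    (dist_le_norm_add_norm x y)
  rw [← div_le_iff₀' two_pos]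
  exact Real.le_sqrt_of_sq_le (by linarith)

end AhlforsBracket

theorem stmt13_general {E : Type*} [SeminormedAddGroup E] {c : ℝ} (hc : 0 < c) {x y : E}
    (hx : ‖x‖ < 1) (hy : ‖y‖ < 1) :
    min (1 / (2 * c)) (1 / (1 + c)) * (dist x y / ahlforsBracket x y) ≤
      dist x y / (dist x y + c * (2 - ‖x‖ - ‖y‖)) ∧
    dist x y / (dist x y + c * (2 - ‖x‖ - ‖y‖)) ≤
      max 1 (1 / c) * (dist x y / ahlforsBracket x y) := by
  have hd : 0 ≤ dist x y := dist_nonneg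
  have hs : 0 < 2 - ‖x‖ - ‖y‖ := by linarith
  have hA : 0 < ahlforsBracket x y := ahlforsBracket_pos hx hy
  have hD : 0 < dist x y + c * (2 - ‖x‖ - ‖y‖) := by positivity
  have hlower := min_mul_add_mul_le hc hd hs.le (dist_le_ahlforsBracket hx.le hy.le)
    (dist_add_le_two_mul_ahlforsBracket hx.le hy.le)
  have hupper := (ahlforsBracket_le hx.le hy.le).trans (add_le_max_mul_add_mul hc hd hs.le)
  constructor
  · rw [← mul_div_assoc, div_le_div_iff₀ hA hD, mul_right_comm, mul_comm (dist x y)]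
    gcongr
  · rw [← mul_div_assoc, div_le_div_iff₀ hD hA, mul_right_comm, mul_comm (dist x y)]
    gcongr

theorem stmt13 (n : ℕ) (hn : 2 ≤ n) (c : ℝ) (hc : 0 < c)
    (x y : EuclideanSpace ℝ (Fin n)) (hx : ‖x‖ < 1) (hy : ‖y‖ < 1) :
    min (1 / (2 * c)) (1 / (1 + c)) *
        (dist x y / Real.sqrt (dist x y ^ 2 + (1 - ‖x‖ ^ 2) * (1 - ‖y‖ ^ 2))) ≤
      dist x y / (dist x y + c * (2 - ‖x‖ - ‖y‖)) ∧
    dist x y / (dist x y + c * (2 - ‖x‖ - ‖y‖)) ≤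
      max 1 (1 / c) *
        (dist x y / Real.sqrt (dist x y ^ 2 + (1 - ‖x‖ ^ 2) * (1 - ‖y‖ ^ 2))) :=
  stmt13_general hc hx hy
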